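/- Suppose the GI/G/1-type Markov chain is irreducible, aperiodic and positive recurrent and the phase matrix A is stochastic. If the set Ω = {z ∈ ℂ : 1 < |z| < φ_{A+} and det(I − A*(z)) = 0} is nonempty, then there exists a positive real number z0 ∈ Ω such that z0 ≤ |z| for every z ∈ Ω. -/

import Mathlib

open Filter Topology
open scoped ENNReal NNReal BigOperators

namespace GIG1

/-- The state space of a `GI/G/1`-type Markov chain: level `i : ℕ`, phase `j : Fin m`. -/
abbrev S (m : ℕ) := ℕ × Fin m

/-- The transition kernel of the `GI/G/1`-type Markov chain with matrix blocks `A, B`. -/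
noncomputable def P {m : ℕ} (A B : ℤ → Matrix (Fin m) (Fin m) ℝ) : S m → S m → ℝ
  | (0, j), (k, s) => B (k : ℤ) j s
  | (i + 1, j), (0, s) => B (-(i + 1 : ℤ)) j s
  | (i + 1, j), (k + 1, s) => A ((k : ℤ) - (i : ℤ)) j s

/-- `n`-step transition probabilities. -/
noncomputable def Pn {m : ℕ} (P : S m → S m → ℝ) : ℕ → S m → S m → ℝ
  | 0, x, y => if x = y then 1 else 0
  | n + 1, x, y => ∑' z : S m, P x z * Pn P n z y

def Stochastic {m : ℕ} (P : S m → S m → ℝ) : Prop :=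
  (∀ x y, 0 ≤ P x y) ∧ ∀ x, HasSum (P x) 1

def ChainIrreducible {m : ℕ} (P : S m → S m → ℝ) : Prop :=
  ∀ x y, ∃ n, 1 ≤ n ∧ 0 < Pn P n x y

def ChainAperiodic {m : ℕ} (P : S m → S m → ℝ) : Prop :=
  ∀ x, ∃ N, ∀ n ≥ N, 0 < Pn P n x x

/-- `pd` is a stationary probability distribution of `P`; for an irreducible aperiodic chain
this is equivalent to positive recurrence. -/
def IsStationary {m : ℕ} (P : S m → S m → ℝ) (pd : S m → ℝ) : Prop :=
  (∀ x, 0 ≤ pd x) ∧ HasSum pd 1 ∧ ∀ y, HasSum (fun x => pd x * P x y) (pd y)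

/-- The phase matrix `A = ∑ₖ Aₖ`. -/
noncomputable def matA {m : ℕ} (A : ℤ → Matrix (Fin m) (Fin m) ℝ) : Matrix (Fin m) (Fin m) ℝ :=
  Matrix.of fun r s => ∑' k : ℤ, A k r s

/-- The phase matrix `A = ∑ₖ Aₖ` is stochastic. -/
def PhaseStochastic {m : ℕ} (A : ℤ → Matrix (Fin m) (Fin m) ℝ) : Prop :=
  ∀ r, HasSum (fun p : ℤ × Fin m => A p.1 r p.2) 1

/-- Irreducibility of a nonnegative matrix. -/
def MatIrreducible {m : ℕ} (M : Matrix (Fin m) (Fin m) ℝ) : Prop :=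
  ∀ r s, ∃ n, 1 ≤ n ∧ 0 < (M ^ n) r s

/-- Radius of convergence of a power series with nonnegative coefficients. -/
noncomputable def radius (c : ℕ → ℝ) : ℝ≥0∞ :=
  ⨆ (r : ℝ≥0) (_ : Summable fun k => c k * (r : ℝ) ^ k), (r : ℝ≥0∞)

/-- `φ_{A+}`: the minimum over entries of the radii of convergence of `∑_{k ≥ 1} A_k(r,s) z^k`. -/
noncomputable def phiA {m : ℕ} (A : ℤ → Matrix (Fin m) (Fin m) ℝ) : ℝ≥0∞ :=
  ⨅ (r : Fin m) (s : Fin m), radius fun k => A ((k : ℤ) + 1) r s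

/-- `φ_{B+}`. -/
noncomputable def phiB {m : ℕ} (B : ℤ → Matrix (Fin m) (Fin m) ℝ) : ℝ≥0∞ :=
  ⨅ (r : Fin m) (s : Fin m), radius fun k => B ((k : ℤ) + 1) r s

/-- The matrix sequence `{C_k}_{k ≥ 1}` is light-tailed. -/
def LightMat {m : ℕ} (C : ℤ → Matrix (Fin m) (Fin m) ℝ) : Prop :=
  ∀ r s, ∃ ε > (0 : ℝ),
    Summable fun k : ℕ => C ((k : ℤ) + 1) r s * Real.exp (ε * ((k : ℝ) + 1))

/-- `A^*(z) = ∑_{k ∈ ℤ} z^k A_k` for complex `z`. -/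
noncomputable def AstarC {m : ℕ} (A : ℤ → Matrix (Fin m) (Fin m) ℝ) (z : ℂ) :
    Matrix (Fin m) (Fin m) ℂ :=
  Matrix.of fun r s => ∑' k : ℤ, (A k r s : ℂ) * z ^ k

/-- `A^*(z) = ∑_{k ∈ ℤ} z^k A_k` for real `z`. -/
noncomputable def AstarR {m : ℕ} (A : ℤ → Matrix (Fin m) (Fin m) ℝ) (z : ℝ) :
    Matrix (Fin m) (Fin m) ℝ :=
  Matrix.of fun r s => ∑' k : ℤ, A k r s * z ^ k

/-- The set `Ω = {z ∈ ℂ : 1 < |z| < φ_{A+}, det(I - A^*(z)) = 0}`. -/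
def Omega {m : ℕ} (A : ℤ → Matrix (Fin m) (Fin m) ℝ) : Set ℂ :=
  {z | 1 < ‖z‖ ∧ ENNReal.ofReal ‖z‖ < phiA A ∧ (1 - AstarC A z).det = 0}

/-- `η`: the minimal modulus of an element of `Ω`, or `∞` when `Ω = ∅`. -/
noncomputable def eta {m : ℕ} (A : ℤ → Matrix (Fin m) (Fin m) ℝ) : ℝ≥0∞ :=
  sInf ((fun z : ℂ => ENNReal.ofReal ‖z‖) '' Omega A)

/-- The largest (Perron–Frobenius) eigenvalue of a nonnegative matrix. -/
noncomputable def chi {m : ℕ} (M : Matrix (Fin m) (Fin m) ℝ) : ℝ :=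
  sSup {r : ℝ | ∃ v : Fin m → ℝ, v ≠ 0 ∧ M.mulVec v = r • v}

theorem Pn_nonneg' {m : ℕ} {P : S m → S m → ℝ} (hP0 : ∀ x y, 0 ≤ P x y) :
    ∀ n x y, 0 ≤ Pn P n x y := by
  intro n
  induction n with
  | zero => intro x y; simp only [Pn]; split_ifs <;> norm_num
  | succ n ih => intro x y; simp only [Pn]; exact tsum_nonneg fun z => mul_nonneg (hP0 _ _) (ih _ _)

theorem closed_reach {m : ℕ} {P : S m → S m → ℝ} (hP0 : ∀ x y, 0 ≤ P x y) (Q : S m → Prop)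
    (hQ : ∀ x y, Q x → 0 < P x y → Q y) :
    ∀ n x y, Q x → 0 < Pn P n x y → Q y := by
  intro n
  induction n with
  | zero =>
    intro x y hx h
    simp only [Pn] at h
    split_ifs at h with hxy
    · exact hxy ▸ hx
    · exact absurd h (lt_irrefl _)
  | succ n ih =>
    intro x y hx h
    simp only [Pn] at h
    by_contra hy
    have : ∀ z, P x z * Pn P n z y = 0 := by
      intro z
      rcases (hP0 x z).eq_or_lt with h0 | h0
      · rw [← h0, zero_mul]
      · rcases (Pn_nonneg' hP0 n z y).eq_or_lt with h1 | h1
        · rw [← h1, mul_zero]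
        · exact absurd (ih z y (hQ x z hx h0) h1) hy
    simp [this] at h

theorem const_of_super {m : ℕ} {M : Matrix (Fin m) (Fin m) ℝ} (hM0 : ∀ r s, 0 ≤ M r s)
    (hM1 : ∀ r, ∑ s, M r s = 1) (hirr : MatIrreducible M) (u : Fin m → ℝ)
    (hu : ∀ r, (M.mulVec u) r ≤ u r) : ∀ r s, u r = u s := by
  have pow0 : ∀ n r s, 0 ≤ (M ^ n) r s := by
    intro n
    induction n with
    | zero => intro r s; simp only [pow_zero, Matrix.one_apply]; split_ifs <;> norm_num
    | succ n ih =>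
      intro r s; rw [pow_succ, Matrix.mul_apply]
      exact Finset.sum_nonneg fun t _ => mul_nonneg (ih _ _) (hM0 _ _)
  have pow1 : ∀ n r, ∑ s, (M ^ n) r s = 1 := by
    intro n
    induction n with
    | zero => intro r; simp [Matrix.one_apply]
    | succ n ih =>
      intro r
      simp only [pow_succ, Matrix.mul_apply]
      rw [Finset.sum_comm]
      simp only [← Finset.mul_sum, hM1, mul_one, ih]
  have powu : ∀ n r, ∑ s, (M ^ n) r s * u s ≤ u r := by
    intro n
    induction n with
    | zero => intro r; simp [Matrix.one_apply]
    | succ n ih =>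
      intro r
      calc ∑ s, (M ^ (n+1)) r s * u s = ∑ t, (M ^ n) r t * (M.mulVec u) t := by
            simp only [pow_succ, Matrix.mul_apply, Matrix.mulVec, dotProduct, Finset.sum_mul,
              Finset.mul_sum]
            rw [Finset.sum_comm]
            simp only [mul_assoc]
        _ ≤ ∑ t, (M ^ n) r t * u t :=
            Finset.sum_le_sum fun t _ => mul_le_mul_of_nonneg_left (hu t) (pow0 _ _ _)
        _ ≤ u r := ih r
  intro a b
  have : Nonempty (Fin m) := ⟨a⟩
  obtain ⟨r, hr⟩ := Finite.exists_min u
  have key : ∀ s, u s = u r := by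
    intro s
    obtain ⟨n, -, hn⟩ := hirr r s
    have h1 : ∑ t, (M ^ n) r t * (u t - u r) ≤ 0 := by
      simp only [mul_sub, Finset.sum_sub_distrib, ← Finset.sum_mul, pow1, one_mul]
      linarith [powu n r]
    have h2 : (M ^ n) r s * (u s - u r) ≤ ∑ t, (M ^ n) r t * (u t - u r) :=
      Finset.single_le_sum (f := fun t => (M ^ n) r t * (u t - u r))
        (fun t _ => mul_nonneg (pow0 _ _ _) (sub_nonneg.2 (hr t))) (Finset.mem_univ s)
    have h3 := hr s
    by_contra hne
    have : 0 < u s - u r := sub_pos.2 (lt_of_le_of_ne h3 (Ne.symm hne))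
    have := mul_pos hn this
    linarith
  rw [key a, key b]

theorem poisson {m : ℕ} {M : Matrix (Fin m) (Fin m) ℝ} (hM0 : ∀ r s, 0 ≤ M r s)
    (hM1 : ∀ r, ∑ s, M r s = 1) (hirr : MatIrreducible M) (j0 : Fin m) (β : Fin m → ℝ) :
    ∃ (h : Fin m → ℝ) (μ : ℝ), ∀ r, h r - (M.mulVec h) r = β r - μ := by
  let T : (Fin m → ℝ) →ₗ[ℝ] (Fin m → ℝ) :=
    { toFun := fun h r => h r - (M.mulVec h) r + h j0
      map_add' := by intro x y; ext r; simp [Matrix.mulVec_add]; ring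
      map_smul' := by intro c x; ext r; simp [Matrix.mulVec_smul]; ring }
  have hconst : ∀ h : Fin m → ℝ, (∀ r s, h r = h s) → ∀ r, (M.mulVec h) r = h r := by
    intro h hc r
    simp only [Matrix.mulVec, dotProduct]
    rw [Finset.sum_congr rfl (fun s _ => by rw [hc s r]), ← Finset.sum_mul, hM1, one_mul]
  have hinj : Function.Injective T := by
    rw [injective_iff_map_eq_zero]
    intro h hT
    have hr : ∀ r, h r - (M.mulVec h) r + h j0 = 0 := fun r => congrFun hT r
    have hc : ∀ r s, h r = h s := by
      rcases le_total (h j0) 0 with h0 | h0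
      · exact const_of_super hM0 hM1 hirr h fun r => by linarith [hr r]
      · have := const_of_super hM0 hM1 hirr (-h) fun r => by
          rw [Matrix.mulVec_neg]; simp only [Pi.neg_apply]; linarith [hr r]
        intro r s
        have := this r s
        simpa using this
    have := hr j0
    rw [hconst h hc] at this
    ext r
    rw [hc r j0]; simp; linarith
  obtain ⟨h, hh⟩ := (LinearMap.injective_iff_surjective.1 hinj) β
  refine ⟨h, h j0, fun r => ?_⟩
  have : h r - (M.mulVec h) r + h j0 = β r := congrFun hh r
  linarith

theorem pair_hasSum {m : ℕ} (a : ℤ → Fin m → ℝ) (t : Fin m → ℝ)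
    (h : ∀ s, HasSum (fun n => a n s) (t s)) :
    HasSum (fun p : ℤ × Fin m => a p.1 p.2) (∑ s, t s) := by
  have h1 : ∀ s0, HasSum (fun p : ℤ × Fin m => if p.2 = s0 then a p.1 p.2 else 0) (t s0) := by
    intro s0
    have hi : Function.Injective (fun n : ℤ => (n, s0)) := fun a b hab => by simpa using hab
    refine (hi.hasSum_iff ?_).1 ?_
    · rintro ⟨n, s⟩ hp
      have : s ≠ s0 := by rintro rfl; exact hp ⟨n, rfl⟩
      simp [this]
    · simpa [Function.comp_def] using h s0
  have h2 := hasSum_sum (s := Finset.univ) (fun s _ => h1 s)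
  simpa using h2

/-- strictly subinvariant vector -/
def Good {m : ℕ} (M : Matrix (Fin m) (Fin m) ℝ) : Prop :=
  ∃ v : Fin m → ℝ, (∀ j, 0 < v j) ∧ ∀ j, (M.mulVec v) j < v j

theorem good_inv_nonneg {m : ℕ} {M : Matrix (Fin m) (Fin m) ℝ} (hM0 : ∀ r s, 0 ≤ M r s)
    (hG : Good M) (y : Fin m → ℝ) (hy : ∀ j, (M.mulVec y) j ≤ y j) : ∀ j, 0 ≤ y j := by
  obtain ⟨v, hv, hMv⟩ := hG
  intro a
  have : Nonempty (Fin m) := ⟨a⟩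
  obtain ⟨r, hr⟩ := Finite.exists_min (fun j => y j / v j)
  set c := y r / v r with hc
  have h1 : ∀ j, c * v j ≤ y j := fun j => by
    have := hr j
    exact (le_div_iff₀ (hv j)).1 this
  have h1r : y r = c * v r := by rw [hc, div_mul_cancel₀]; exact (hv r).ne'
  have hc0 : 0 ≤ c := by
    by_contra hneg
    push Not at hneg
    have h2 : c * (M.mulVec v) r ≤ (M.mulVec y) r := by
      simp only [Matrix.mulVec, dotProduct, Finset.mul_sum]
      refine Finset.sum_le_sum fun s _ => ?_
      have := mul_le_mul_of_nonneg_left (h1 s) (hM0 r s)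
      linarith
    have h3 := hy r
    have h4 := mul_lt_mul_of_neg_left (hMv r) hneg
    linarith
  exact le_trans (mul_nonneg hc0 (hv a).le) (h1 a)

theorem good_det_ne {m : ℕ} {M : Matrix (Fin m) (Fin m) ℝ}
    (hG : Good M) (Z : Matrix (Fin m) (Fin m) ℂ) (hZ : ∀ r s, ‖Z r s‖ ≤ M r s) :
    (1 - Z).det ≠ 0 := by
  intro hdet
  obtain ⟨w, hw, hZw⟩ := Matrix.exists_mulVec_eq_zero_iff.2 hdet
  have hM0 : ∀ r s, 0 ≤ M r s := fun r s => (norm_nonneg _).trans (hZ r s)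
  have hww : ∀ j, (Z.mulVec w) j = w j := by
    intro j
    have := congrFun hZw j
    rw [Matrix.sub_mulVec, Matrix.one_mulVec] at this
    simp only [Pi.sub_apply, Pi.zero_apply] at this
    exact (sub_eq_zero.1 this).symm
  have := good_inv_nonneg hM0 hG (fun j => - ‖w j‖) (fun j => by
    have h1 : ‖w j‖ ≤ ∑ s, M j s * ‖w s‖ := by
      rw [← hww j]
      simp only [Matrix.mulVec, dotProduct]
      refine (norm_sum_le _ _).trans (Finset.sum_le_sum fun s _ => ?_)
      rw [norm_mul]
      refine (mul_le_mul_of_nonneg_right (hZ j s) (norm_nonneg _)).trans ?_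
      exact le_of_eq rfl
    have h2 : (M.mulVec fun j => -‖w j‖) j = - ∑ s, M j s * ‖w s‖ := by
      simp [Matrix.mulVec, dotProduct]
    rw [h2]; linarith)
  apply hw
  ext j
  have h := this j
  have := norm_nonneg (w j)
  exact norm_eq_zero.1 (by linarith)

theorem good_open {m : ℕ} {X : Type*} [TopologicalSpace X] {s : Set X}
    {F : X → Matrix (Fin m) (Fin m) ℝ} {x : X}
    (hF : ContinuousWithinAt F s x) (hG : Good (F x)) : ∀ᶠ y in 𝓝[s] x, Good (F y) := by
  obtain ⟨v, hv, hMv⟩ := hG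
  have : ∀ j, ∀ᶠ y in 𝓝[s] x, ((F y).mulVec v) j < v j := by
    intro j
    have hc : ContinuousWithinAt (fun y => ((F y).mulVec v) j) s x := by
      have h0 : Continuous fun M : Matrix (Fin m) (Fin m) ℝ => (M.mulVec v) j := by
        simp only [Matrix.mulVec, dotProduct]; fun_prop
      exact h0.continuousAt.comp_continuousWithinAt hF
    exact hc.eventually_lt_const (hMv j)
  filter_upwards [eventually_all.2 this] with y hy using ⟨v, hv, hy⟩

theorem det_limit {m : ℕ} {X : Type*} [TopologicalSpace X] {s : Set X}
    {F : X → Matrix (Fin m) (Fin m) ℝ} {x : X} [(𝓝[s] x).NeBot]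
    (hF0 : ∀ y r t, y ∈ s → 0 ≤ F y r t) (hx0 : ∀ r s, 0 ≤ F x r s)
    (hF : ContinuousWithinAt F s x) (hG : ∀ y ∈ s, Good (F y)) (hx : ¬ Good (F x)) :
    (1 - F x).det = 0 := by
  by_contra hdet
  apply hx
  have hu : IsUnit (1 - F x).det := isUnit_iff_ne_zero.2 hdet
  set e : Fin m → ℝ := fun _ => 1
  -- v y = det * inverse e, via adjugate
  have hc : ContinuousWithinAt (fun y => ((1 - F y)⁻¹).mulVec e) s x := by
    have h1 : ContinuousWithinAt (fun y => (1 - F y).det) s x :=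
      (Continuous.matrix_det (continuous_const.sub continuous_id)).continuousAt.comp_continuousWithinAt hF
    have h2 : ContinuousWithinAt (fun y => (1 - F y).adjugate.mulVec e) s x :=
      ((Continuous.matrix_adjugate (continuous_const.sub continuous_id)).matrix_mulVec
        continuous_const).continuousAt.comp_continuousWithinAt hF
    have h3 := (h1.inv₀ hdet).smul h2
    refine h3.congr (fun y _ => ?_) ?_ <;>
    · rw [Matrix.inv_def, Matrix.smul_mulVec, Ring.inverse_eq_inv']
      rfl
  have hnn : ∀ j, 0 ≤ (((1 - F x)⁻¹).mulVec e) j := by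
    intro j
    have hcj : Tendsto (fun y => (((1 - F y)⁻¹).mulVec e) j) (𝓝[s] x) (𝓝 ((((1 - F x)⁻¹).mulVec e) j)) :=
      ((continuous_apply j).tendsto _).comp hc
    refine ge_of_tendsto hcj ?_
    filter_upwards [self_mem_nhdsWithin] with y hy
    have hgy := hG y hy
    have hdy : (1 - F y).det ≠ 0 := by
      have := good_det_ne hgy ((F y).map (Complex.ofReal)) (fun r t => by
        simp [abs_of_nonneg (hF0 y r t hy)])
      intro h0
      apply this
      have h5 : (1 - (F y).map Complex.ofReal) = (Complex.ofRealHom).mapMatrix (1 - F y) := by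
        simp [map_sub]
        rfl
      rw [h5, ← RingHom.map_det, h0, map_zero]
    refine good_inv_nonneg (fun r t => hF0 y r t hy) hgy _ ?_ j
    intro k
    have h6 : (1 - F y).mulVec (((1 - F y)⁻¹).mulVec e) = e := by
      rw [Matrix.mulVec_mulVec, Matrix.mul_nonsing_inv _ (isUnit_iff_ne_zero.2 hdy), Matrix.one_mulVec]
    have h7 := congrFun h6 k
    rw [Matrix.sub_mulVec, Matrix.one_mulVec] at h7
    simp only [Pi.sub_apply, e] at h7 ⊢
    linarith
  have h6 : (1 - F x).mulVec (((1 - F x)⁻¹).mulVec e) = e := by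
    rw [Matrix.mulVec_mulVec, Matrix.mul_nonsing_inv _ hu, Matrix.one_mulVec]
  have h7 : ∀ k, (((1 - F x)⁻¹).mulVec e) k - ((F x).mulVec (((1 - F x)⁻¹).mulVec e)) k = 1 := by
    intro k
    have h7 := congrFun h6 k
    rwa [Matrix.sub_mulVec, Matrix.one_mulVec] at h7
  refine ⟨((1 - F x)⁻¹).mulVec e, fun k => ?_, fun k => by linarith [h7 k]⟩
  have h8 : 0 ≤ ((F x).mulVec (((1 - F x)⁻¹).mulVec e)) k := by
    conv_rhs => rw [Matrix.mulVec]
    exact Finset.sum_nonneg fun t _ => mul_nonneg (hx0 k t) (hnn t)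
  linarith [h7 k]

theorem summable_R {m : ℕ} {A : ℤ → Matrix (Fin m) (Fin m) ℝ} (hA0 : ∀ k r s, 0 ≤ A k r s)
    (hs : ∀ r s, Summable fun n => A n r s) {R : ℝ} (hR : 1 < R)
    (hphi : ENNReal.ofReal R < phiA A) (j s : Fin m) : Summable fun n : ℤ => A n j s * R ^ n := by
  have h1 : ENNReal.ofReal R < radius fun k => A ((k : ℤ) + 1) j s :=
    lt_of_lt_of_le hphi ((iInf_le _ j).trans (iInf_le _ s))
  unfold radius at h1
  obtain ⟨r, hr⟩ := lt_iSup_iff.1 h1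
  obtain ⟨hsum, hr⟩ := lt_iSup_iff.1 hr
  have hRr : R ≤ (r : ℝ) := by
    have : ENNReal.ofReal R ≤ ENNReal.ofReal (r : ℝ) := by simpa using hr.le
    exact (ENNReal.ofReal_le_ofReal_iff r.2).1 this
  have hR0 : 0 < R := by linarith
  refine Summable.of_nat_of_neg_add_one ?_ ?_
  · rw [← summable_nat_add_iff 1]
    refine Summable.of_nonneg_of_le (fun n => mul_nonneg (hA0 _ _ _) (zpow_nonneg hR0.le _))
      (fun n => ?_) (hsum.mul_right R)
    push_cast
    rw [zpow_add₀ hR0.ne', zpow_natCast, zpow_one, ← mul_assoc]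
    have := hA0 ((n : ℤ) + 1) j s
    gcongr
  · have h2 : Summable fun n : ℕ => A (-((n : ℤ) + 1)) j s :=
      (hs j s).comp_injective (i := fun n : ℕ => -((n : ℤ) + 1)) (fun a b h => by simpa using h)
    refine Summable.of_nonneg_of_le (fun n => mul_nonneg (hA0 _ _ _) (zpow_nonneg hR0.le _))
      (fun n => ?_) h2
    exact mul_le_of_le_one_right (hA0 _ _ _) (zpow_le_one_of_nonpos₀ hR.le (by omega))

theorem zpow_le_one_add {x R : ℝ} (h1 : 1 ≤ x) (hxR : x ≤ R) (n : ℤ) : x ^ n ≤ 1 + R ^ n := by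
  have hR0 : 0 < R := by linarith
  rcases le_total 0 n with hn | hn
  · have := zpow_le_zpow_left₀ hn (by linarith) hxR
    linarith
  · have := zpow_le_one_of_nonpos₀ h1 hn
    have := zpow_nonneg hR0.le n
    linarith

theorem q_bound {x R : ℝ} (h1 : 1 < x) (hxR : x ≤ R) (N : ℕ) (n : ℤ) :
    |(x ^ (max n (-(N : ℤ))) - 1) / (x - 1)| ≤ N + R ^ n / (R - 1) := by
  have hR0 : 0 < R := by linarith
  have hRn : 0 ≤ R ^ n / (R - 1) := div_nonneg (zpow_nonneg hR0.le n) (by linarith)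
  rcases le_total 0 n with hn | hn
  · obtain ⟨k, rfl⟩ := Int.eq_ofNat_of_zero_le hn
    rw [max_eq_left (by omega), zpow_natCast, ← geom_sum_eq h1.ne', zpow_natCast]
    rw [abs_of_nonneg (Finset.sum_nonneg fun i _ => by positivity)]
    have h2 : ∑ i ∈ Finset.range k, x ^ i ≤ ∑ i ∈ Finset.range k, R ^ i :=
      Finset.sum_le_sum fun i _ => by gcongr
    rw [geom_sum_eq (by linarith : R ≠ 1)] at h2
    have h3 : (R ^ k - 1) / (R - 1) ≤ R ^ k / (R - 1) := by
      apply div_le_div_of_nonneg_right _ (by linarith)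
      linarith
    have : (0:ℝ) ≤ N := by positivity
    linarith
  · obtain ⟨k, hk⟩ : ∃ k : ℕ, max n (-(N : ℤ)) = -(k : ℤ) :=
      ⟨(-(max n (-(N : ℤ)))).toNat, by omega⟩
    have hkN : (k : ℝ) ≤ N := by exact_mod_cast (by omega : k ≤ N)
    rw [hk, zpow_neg, zpow_natCast, ← inv_pow]
    have hx1 : x⁻¹ ≤ 1 := inv_le_one_of_one_le₀ h1.le
    have hx0 : 0 < x⁻¹ := by positivity
    have hb := one_add_mul_le_pow (by linarith : -2 ≤ x⁻¹ - 1) k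
    have hc : (x⁻¹) ^ k ≤ 1 := pow_le_one₀ hx0.le hx1
    have hd : 1 - x⁻¹ ≤ x - 1 := by
      have : x⁻¹ * x = 1 := inv_mul_cancel₀ (by linarith)
      nlinarith
    rw [show 1 + (x⁻¹ - 1) = x⁻¹ by ring] at hb
    have he : 1 - (x⁻¹) ^ k ≤ k * (x - 1) := by
      have := mul_le_mul_of_nonneg_left hd (Nat.cast_nonneg (α := ℝ) k)
      linarith
    rw [abs_div, abs_of_nonpos (by linarith), abs_of_pos (by linarith : 0 < x - 1)]
    have : -((x⁻¹) ^ k - 1) / (x - 1) ≤ k := by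
      rw [div_le_iff₀ (by linarith)]; linarith
    linarith

theorem q_tendsto (l : ℤ) : Tendsto (fun x : ℝ => (x ^ l - 1) / (x - 1)) (𝓝[>] 1) (𝓝 (l : ℝ)) := by
  have h := (hasDerivAt_zpow l (1 : ℝ) (Or.inl one_ne_zero)).tendsto_slope
  simp only [one_zpow, mul_one] at h
  have h2 := h.mono_left (nhdsWithin_mono (1 : ℝ) (fun x (hx : x ∈ Set.Ioi (1:ℝ)) => (ne_of_gt hx : x ≠ 1)))
  refine h2.congr fun x => ?_
  simp [slope_def_field]

theorem good_near_one {m : ℕ} {A : ℤ → Matrix (Fin m) (Fin m) ℝ} (hA0 : ∀ k r s, 0 ≤ A k r s)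
    (hs : ∀ r s, Summable fun n => A n r s) (hrow : ∀ r, ∑ s, matA A r s = 1)
    {R : ℝ} (hR : 1 < R) (hRs : ∀ j s, Summable fun n : ℤ => A n j s * R ^ n)
    (N : ℕ) (h : Fin m → ℝ)
    (hneg : ∀ j, ∑ s, (∑' n : ℤ, A n j s * ((max n (-(N : ℤ)) : ℤ) : ℝ))
      + (matA A).mulVec h j - h j < 0) :
    ∀ᶠ x in 𝓝[>] (1 : ℝ), Good (AstarR A x) := by
  set q : ℤ → ℝ → ℝ := fun n x => (x ^ (max n (-(N : ℤ))) - 1) / (x - 1) with hq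
  have hnear : ∀ᶠ x in 𝓝[>] (1 : ℝ), x ∈ Set.Ioc (1:ℝ) R := Ioc_mem_nhdsGT hR
  have hbs : ∀ j s, Summable fun n : ℤ => A n j s * (N + R ^ n / (R - 1)) := by
    intro j s
    have := ((hs j s).mul_right (N : ℝ)).add ((hRs j s).mul_right (R - 1)⁻¹)
    refine this.congr fun n => ?_
    rw [div_eq_mul_inv]; ring
  have hqt : ∀ j s, Tendsto (fun x => ∑' n : ℤ, A n j s * q n x) (𝓝[>] (1:ℝ))
      (𝓝 (∑' n : ℤ, A n j s * ((max n (-(N : ℤ)) : ℤ) : ℝ))) := by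
    intro j s
    refine tendsto_tsum_of_dominated_convergence (hbs j s) (fun n => (q_tendsto _).const_mul _) ?_
    filter_upwards [hnear] with x hx n
    rw [norm_mul, Real.norm_eq_abs, Real.norm_eq_abs, abs_of_nonneg (hA0 _ _ _)]
    exact mul_le_mul_of_nonneg_left (q_bound hx.1 hx.2 N n) (hA0 _ _ _)
  have hvt : ∀ s, Tendsto (fun x : ℝ => 1 + (x - 1) * h s) (𝓝[>] (1:ℝ)) (𝓝 1) := by
    intro s
    have : Continuous fun x : ℝ => 1 + (x - 1) * h s := by fun_prop
    have := this.tendsto 1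
    simp only [sub_self, zero_mul, add_zero] at this
    exact this.mono_left nhdsWithin_le_nhds
  have hFt : ∀ j, ∀ᶠ x in 𝓝[>] (1:ℝ), ∑ s, (∑' n : ℤ, A n j s * q n x) * (1 + (x - 1) * h s)
      + (matA A).mulVec h j - h j < 0 := by
    intro j
    have : Tendsto (fun x => ∑ s, (∑' n : ℤ, A n j s * q n x) * (1 + (x - 1) * h s)
      + (matA A).mulVec h j - h j) (𝓝[>] (1:ℝ))
      (𝓝 (∑ s, (∑' n : ℤ, A n j s * ((max n (-(N : ℤ)) : ℤ) : ℝ)) * 1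
      + (matA A).mulVec h j - h j)) :=
      ((tendsto_finsetSum _ fun s _ => (hqt j s).mul (hvt s)).add_const _).sub_const _
    simp only [mul_one] at this
    exact this.eventually_lt_const (hneg j)
  filter_upwards [hnear, eventually_all.2 hFt,
    eventually_all.2 (fun s => (hvt s).eventually_const_lt one_pos)] with x hx hF hv
  refine ⟨fun s => 1 + (x - 1) * h s, hv, fun j => ?_⟩
  have hx1 : 0 < x - 1 := by linarith [hx.1]
  have hentry : ∀ s, AstarR A x j s ≤ matA A j s + (x - 1) * ∑' n : ℤ, A n j s * q n x := by
    intro s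
    have hqs : Summable fun n : ℤ => A n j s * q n x := by
      refine Summable.of_norm_bounded (hbs j s) fun n => ?_
      rw [norm_mul, Real.norm_eq_abs, Real.norm_eq_abs, abs_of_nonneg (hA0 _ _ _)]
      exact mul_le_mul_of_nonneg_left (q_bound hx.1 hx.2 N n) (hA0 _ _ _)
    have hxs : Summable fun n : ℤ => A n j s * x ^ n := by
      refine Summable.of_nonneg_of_le
        (fun n => mul_nonneg (hA0 _ _ _) (zpow_nonneg (by linarith) _)) (fun n => ?_)
        ((hs j s).add (hRs j s))
      have := mul_le_mul_of_nonneg_left (zpow_le_one_add hx.1.le hx.2 n) (hA0 n j s)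
      linarith
    simp only [AstarR, matA, Matrix.of_apply]
    rw [← tsum_mul_left, ← (hs j s).tsum_add (hqs.mul_left _)]
    refine hxs.tsum_le_tsum (fun n => ?_) ((hs j s).add (hqs.mul_left _))
    have h1 : x ^ n ≤ x ^ (max n (-(N : ℤ))) := zpow_le_zpow_right₀ hx.1.le (le_max_left _ _)
    have h2 : x ^ (max n (-(N : ℤ))) = 1 + (x - 1) * q n x := by
      simp only [hq]; field_simp; ring
    have := mul_le_mul_of_nonneg_left (h1.trans_eq h2) (hA0 n j s)
    linarith
  have h1 : (AstarR A x).mulVec (fun s => 1 + (x - 1) * h s) j ≤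
      ∑ s, (matA A j s + (x - 1) * ∑' n : ℤ, A n j s * q n x) * (1 + (x - 1) * h s) := by
    simp only [Matrix.mulVec, dotProduct]
    exact Finset.sum_le_sum fun s _ => mul_le_mul_of_nonneg_right (hentry s) (hv s).le
  have h2 : ∑ s, (matA A j s + (x - 1) * ∑' n : ℤ, A n j s * q n x) * (1 + (x - 1) * h s)
      = 1 + (x - 1) * (matA A).mulVec h j
        + (x - 1) * ∑ s, (∑' n : ℤ, A n j s * q n x) * (1 + (x - 1) * h s) := by
    trans ∑ s, matA A j s + (x - 1) * (matA A).mulVec h j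
        + (x - 1) * ∑ s, (∑' n : ℤ, A n j s * q n x) * (1 + (x - 1) * h s)
    swap
    · rw [hrow j]
    simp only [Matrix.mulVec, dotProduct, Finset.mul_sum, ← Finset.sum_add_distrib]
    refine Finset.sum_congr rfl fun s _ => by ring
  have h3 := mul_neg_of_pos_of_neg hx1 (hF j)
  simp only
  linarith

theorem astar_cont {m : ℕ} {A : ℤ → Matrix (Fin m) (Fin m) ℝ} (hA0 : ∀ k r s, 0 ≤ A k r s)
    (hs : ∀ r s, Summable fun n => A n r s)
    {R : ℝ} (hRs : ∀ j s, Summable fun n : ℤ => A n j s * R ^ n) :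
    ContinuousOn (AstarR A) (Set.Icc 1 R) := by
  refine continuousOn_pi.2 fun j => continuousOn_pi.2 fun s => ?_
  simp only [AstarR, Matrix.of_apply]
  refine continuousOn_tsum (fun n x hx => ?_) ((hs j s).add (hRs j s)) (fun n x hx => ?_)
  · have : x ≠ 0 := by have := hx.1; intro h; linarith
    exact (continuousAt_const.mul (continuousAt_zpow₀ x n (Or.inl this))).continuousWithinAt
  · have hx0 : (0:ℝ) ≤ x := by linarith [hx.1]
    rw [Real.norm_of_nonneg (mul_nonneg (hA0 _ _ _) (zpow_nonneg hx0 _))]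
    have := mul_le_mul_of_nonneg_left (zpow_le_one_add hx.1 hx.2 n) (hA0 n j s)
    linarith

theorem astar_norm {m : ℕ} {A : ℤ → Matrix (Fin m) (Fin m) ℝ} (hA0 : ∀ k r s, 0 ≤ A k r s)
    (hs : ∀ r s, Summable fun n => A n r s)
    {R : ℝ} (hRs : ∀ j s, Summable fun n : ℤ => A n j s * R ^ n) (z : ℂ) (hz1 : 1 ≤ ‖z‖)
    (hzR : ‖z‖ ≤ R) (j s : Fin m) : ‖AstarC A z j s‖ ≤ AstarR A ‖z‖ j s := by
  simp only [AstarR, AstarC, Matrix.of_apply]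
  have he : ∀ n : ℤ, ‖(A n j s : ℂ) * z ^ n‖ = A n j s * ‖z‖ ^ n := by
    intro n
    rw [norm_mul, norm_zpow, Complex.norm_real, Real.norm_of_nonneg (hA0 _ _ _)]
  have : Summable fun n : ℤ => ‖(A n j s : ℂ) * z ^ n‖ := by
    refine Summable.of_nonneg_of_le (fun n => norm_nonneg _) (fun n => ?_)
      ((hs j s).add (hRs j s))
    rw [he]
    have := mul_le_mul_of_nonneg_left (zpow_le_one_add hz1 hzR n) (hA0 n j s)
    linarith
  refine (norm_tsum_le_tsum_norm this).trans_eq ?_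
  simp only [he]

/-- The final argument, given goodness near one. -/
theorem main_of_near {m : ℕ} {A : ℤ → Matrix (Fin m) (Fin m) ℝ} (hA0 : ∀ k r s, 0 ≤ A k r s)
    (hs : ∀ r s, Summable fun n => A n r s)
    (w : ℂ) (hw : w ∈ Omega A) (hnear : ∀ᶠ x in 𝓝[>] (1 : ℝ), Good (AstarR A x)) :
    ∃ z0 : ℂ, z0 ∈ Omega A ∧ 0 < z0.re ∧ z0.im = 0 ∧
      ∀ z ∈ Omega A, ‖z0‖ ≤ ‖z‖ := by
  obtain ⟨hR, hphi, hdet⟩ := hw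
  set R := ‖w‖ with hRdef
  have hRs := summable_R hA0 hs hR hphi
  have hnn : ∀ x : ℝ, 0 ≤ x → ∀ r s, 0 ≤ AstarR A x r s := by
    intro x hx r s
    simp only [AstarR, Matrix.of_apply]
    exact tsum_nonneg fun n => mul_nonneg (hA0 _ _ _) (zpow_nonneg hx _)
  have hcont := astar_cont hA0 hs hRs
  set U : Set ℝ := {x | x ∈ Set.Ioc 1 R ∧ ¬ Good (AstarR A x)} with hU
  have hRU : R ∈ U := ⟨⟨hR, le_rfl⟩, fun hG =>
    good_det_ne hG _ (astar_norm hA0 hs hRs w hR.le le_rfl) hdet⟩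
  have hbdd : BddBelow U := ⟨1, fun x hx => hx.1.1.le⟩
  set x0 := sInf U with hx0
  have hx0R : x0 ≤ R := csInf_le hbdd hRU
  obtain ⟨b, hb, hbG⟩ := (mem_nhdsGT_iff_exists_Ioo_subset).1 hnear
  have hx01 : 1 < x0 := by
    refine lt_of_lt_of_le hb (le_csInf ⟨R, hRU⟩ fun x hx => ?_)
    by_contra hlt
    push Not at hlt
    exact hx.2 (hbG ⟨hx.1.1, hlt⟩)
  have hbelow : ∀ x ∈ Set.Ioo 1 x0, Good (AstarR A x) := by
    intro x hx
    by_contra hG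
    have : x0 ≤ x := csInf_le hbdd ⟨⟨hx.1, hx.2.le.trans hx0R⟩, hG⟩
    exact absurd hx.2 (not_lt.2 this)
  have hx0G : ¬ Good (AstarR A x0) := by
    intro hG
    have hev := good_open (hcont x0 ⟨hx01.le, hx0R⟩) hG
    have hcl : x0 ∈ closure U := csInf_mem_closure ⟨R, hRU⟩ hbdd
    have hfr : ∃ᶠ x in 𝓝 x0, x ∈ U := mem_closure_iff_frequently.1 hcl
    obtain ⟨x, hxU, hx⟩ := (hfr.and_eventually (eventually_nhdsWithin_iff.1 hev)).exists
    exact hxU.2 (hx ⟨hxU.1.1.le, hxU.1.2⟩)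
  have hne : (𝓝[Set.Ioo 1 x0] x0).NeBot := right_nhdsWithin_Ioo_neBot hx01
  have hdet0 : (1 - AstarR A x0).det = 0 := by
    refine det_limit (s := Set.Ioo 1 x0) (F := AstarR A) ?_ (hnn x0 (by linarith)) ?_ hbelow hx0G
    · intro y r t hy
      exact hnn y (by linarith [hy.1]) r t
    · exact (hcont x0 ⟨hx01.le, hx0R⟩).mono fun y hy => ⟨hy.1.le, hy.2.le.trans hx0R⟩
  have hmap : AstarC A (x0 : ℂ) = (Complex.ofRealHom).mapMatrix (AstarR A x0) := by
    ext r s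
    simp [AstarC, AstarR, Complex.ofReal_tsum]
  have hnorm : ‖(x0 : ℂ)‖ = x0 := by
    rw [Complex.norm_real, Real.norm_of_nonneg (by linarith)]
  refine ⟨(x0 : ℂ), ⟨?_, ?_, ?_⟩, ?_, ?_, ?_⟩
  · rwa [hnorm]
  · rw [hnorm]
    exact lt_of_le_of_lt (ENNReal.ofReal_le_ofReal hx0R) hphi
  · rw [hmap, ← map_one (Complex.ofRealHom).mapMatrix, ← map_sub, ← RingHom.map_det, hdet0, map_zero]
  · simpa using by linarith
  · simp
  · intro z hz
    rw [hnorm]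
    rcases le_total ‖z‖ R with hzR | hzR
    · refine csInf_le hbdd ⟨⟨hz.1, hzR⟩, fun hG => ?_⟩
      exact good_det_ne hG _ (astar_norm hA0 hs hRs z hz.1.le hzR) hz.2.2
    · exact hx0R.trans hzR

theorem kernel_transfer {m : ℕ} (A B : ℤ → Matrix (Fin m) (Fin m) ℝ) (φ : ℤ → Fin m → ℝ)
    (hφ : ∀ l s, l ≤ 0 → φ l s = 0) (i : ℕ) (j : Fin m) (t : ℝ) :
    HasSum (fun y : S m => P A B (i + 1, j) y * φ (y.1 : ℤ) y.2) t ↔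
    HasSum (fun p : ℤ × Fin m => A p.1 j p.2 * φ ((i : ℤ) + 1 + p.1) p.2) t := by
  have hi : Function.Injective (fun y : S m => (((y.1 : ℤ) - (i + 1), y.2) : ℤ × Fin m)) := by
    rintro ⟨a, b⟩ ⟨c, d⟩ h
    simp only [Prod.mk.injEq] at h
    ext
    · simp only; omega
    · simp [h.2]
  rw [← hi.hasSum_iff]
  · apply Eq.to_iff
    congr 1
    funext y
    obtain ⟨k, s⟩ := y
    simp only [Function.comp]
    cases k with
    | zero => rw [hφ _ _ (by simp), hφ _ _ (by simp)]; simp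
    | succ k =>
      simp only [P]
      have e1 : (((k + 1 : ℕ) : ℤ) - ((i : ℤ) + 1)) = (k : ℤ) - (i : ℤ) := by push_cast; ring
      have e2 : (i : ℤ) + 1 + ((k : ℤ) - (i : ℤ)) = ((k + 1 : ℕ) : ℤ) := by push_cast; ring
      rw [e1, e2]
  · rintro ⟨n, s⟩ hn
    have : (i : ℤ) + 1 + n ≤ 0 := by
      by_contra hlt
      push Not at hlt
      refine hn ⟨(((i : ℤ) + 1 + n).toNat, s), ?_⟩
      simp only [Prod.mk.injEq, and_true]
      omega
    simp only
    rw [hφ _ _ this, mul_zero]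

theorem stat_swap {m : ℕ} {P : S m → S m → ℝ} (hP : Stochastic P) {pd : S m → ℝ}
    (hpd : IsStationary P pd) (g : S m → ℝ) (N : ℝ) (hg0 : ∀ x, 0 ≤ g x) (hgN : ∀ x, g x ≤ N) :
    HasSum (fun x => pd x * (∑' y, P x y * g y - g x)) 0 := by
  obtain ⟨hP0, hP1⟩ := hP
  obtain ⟨h0, h1, hst⟩ := hpd
  have hPg : ∀ x, Summable fun y => P x y * g y := fun x =>
    Summable.of_nonneg_of_le (fun y => mul_nonneg (hP0 _ _) (hg0 _))
      (fun y => mul_le_mul_of_nonneg_left (hgN y) (hP0 x y)) ((hP1 x).summable.mul_right N)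
  have hPgN : ∀ x, ∑' y, P x y * g y ≤ N := by
    intro x
    have := (hPg x).tsum_le_tsum (fun y => mul_le_mul_of_nonneg_left (hgN y) (hP0 x y))
      ((hP1 x).summable.mul_right N)
    rwa [((hP1 x).mul_right N).tsum_eq, one_mul] at this
  have hPg0 : ∀ x, 0 ≤ ∑' y, P x y * g y := fun x =>
    tsum_nonneg fun y => mul_nonneg (hP0 _ _) (hg0 _)
  have hs1 : Summable fun x => pd x * ∑' y, P x y * g y :=
    Summable.of_nonneg_of_le (fun x => mul_nonneg (h0 x) (hPg0 x))
      (fun x => mul_le_mul_of_nonneg_left (hPgN x) (h0 x)) (h1.summable.mul_right N)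
  have hs2 : Summable fun x => pd x * g x :=
    Summable.of_nonneg_of_le (fun x => mul_nonneg (h0 x) (hg0 x))
      (fun x => mul_le_mul_of_nonneg_left (hgN x) (h0 x)) (h1.summable.mul_right N)
  have hprod : Summable fun p : S m × S m => pd p.1 * (P p.1 p.2 * g p.2) := by
    refine (summable_prod_of_nonneg
      (fun p => mul_nonneg (h0 _) (mul_nonneg (hP0 _ _) (hg0 _)))).2 ⟨?_, ?_⟩
    · intro x; exact (hPg x).mul_left (pd x)
    · simpa only [tsum_mul_left] using hs1
  have hcomm : ∑' x, ∑' y, pd x * (P x y * g y) = ∑' y, ∑' x, pd x * (P x y * g y) :=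
    Summable.tsum_comm (f := fun x y => pd x * (P x y * g y)) hprod |>.symm
  have he : ∑' x, pd x * ∑' y, P x y * g y = ∑' y, pd y * g y := by
    simp only [tsum_mul_left] at hcomm
    rw [hcomm]
    refine tsum_congr fun y => ?_
    have := ((hst y).mul_right (g y)).tsum_eq
    rw [← this]
    exact tsum_congr fun x => by ring
  have := hs1.hasSum.sub hs2.hasSum
  rw [he, sub_self] at this
  simpa only [mul_sub] using this

theorem no_nonneg_drift {m : ℕ} (hm : 0 < m) (A B : ℤ → Matrix (Fin m) (Fin m) ℝ)
    (hA0 : ∀ k r s, 0 ≤ A k r s) (hs : ∀ r s, Summable fun n => A n r s)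
    (hP : Stochastic (P A B)) (hirr : ChainIrreducible (P A B))
    (hphase : PhaseStochastic A)
    (pd : S m → ℝ) (hpd : IsStationary (P A B) pd)
    (hmean : ∀ j s, Summable fun n : ℤ => A n j s * |(n : ℝ)|)
    (h : Fin m → ℝ) (μ : ℝ) (hμ : 0 ≤ μ)
    (hpo : ∀ j, ∑ s, (∑' n : ℤ, A n j s * (n : ℝ)) + (matA A).mulVec h j - h j = μ) : False := by
  have hP0 := hP.1
  have hP1 := hP.2
  obtain ⟨hpd0, hpd1, hpds⟩ := id hpd
  -- bound on h
  obtain ⟨H, hH0, hH⟩ : ∃ H : ℝ, 0 ≤ H ∧ ∀ s, |h s| ≤ H :=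
    ⟨∑ s, |h s|, Finset.sum_nonneg fun _ _ => abs_nonneg _, fun s =>
      Finset.single_le_sum (f := fun s => |h s|) (fun _ _ => abs_nonneg _) (Finset.mem_univ s)⟩
  have hHa : ∀ s, h s ≤ H := fun s => (abs_le.1 (hH s)).2
  have hHb : ∀ s, -H ≤ h s := fun s => (abs_le.1 (hH s)).1
  -- pair sums
  have hWabs : ∀ j, Summable fun p : ℤ × Fin m => A p.1 j p.2 * |(p.1 : ℝ)| := fun j =>
    (pair_hasSum (fun n s => A n j s * |(n : ℝ)|) _ (fun s => (hmean j s).hasSum)).summable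
  have hW1 : ∀ j, HasSum (fun p : ℤ × Fin m => A p.1 j p.2) 1 := hphase
  have hWmean : ∀ j, HasSum (fun p : ℤ × Fin m => A p.1 j p.2 * ((p.1 : ℝ) + h p.2)) (μ + h j) := by
    intro j
    have hn : ∀ s, Summable fun n : ℤ => A n j s * (n : ℝ) := by
      intro s
      refine Summable.of_norm_bounded (hmean j s) fun n => ?_
      rw [norm_mul, Real.norm_of_nonneg (hA0 _ _ _), Real.norm_eq_abs]
    have := pair_hasSum (fun n s => A n j s * (n : ℝ) + A n j s * h s) _
      (fun s => (hn s).hasSum.add ((hs j s).hasSum.mul_right (h s)))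
    simp only [← mul_add] at this
    convert this using 1
    have h2 := hpo j
    rw [Finset.sum_add_distrib]
    simp only [Matrix.mulVec, dotProduct, matA, Matrix.of_apply] at h2
    linarith
  set fZ : ℤ → Fin m → ℝ := fun l s => max 0 ((l : ℝ) + h s - H) with hfZ
  set g : ℕ → ℤ → Fin m → ℝ := fun N l s => min (fZ l s) N with hg
  have hf0 : ∀ l s, 0 ≤ fZ l s := fun l s => le_max_left _ _
  have hfz : ∀ l s, l ≤ 0 → fZ l s = 0 := by
    intro l s hl
    have : (l : ℝ) ≤ 0 := by exact_mod_cast hl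
    exact max_eq_left (by linarith [hHa s])
  have hg0 : ∀ N l s, 0 ≤ g N l s := fun N l s => le_min (hf0 _ _) (Nat.cast_nonneg _)
  have hgf : ∀ N l s, g N l s ≤ fZ l s := fun N l s => min_le_left _ _
  have hgN : ∀ N l s, g N l s ≤ N := fun N l s => min_le_right _ _
  have hgz : ∀ N l s, l ≤ 0 → g N l s = 0 := fun N l s hl =>
    le_antisymm ((hgf N l s).trans_eq (hfz l s hl)) (hg0 _ _ _)
  have hgt : ∀ l s, Tendsto (fun N => g N l s) atTop (𝓝 (fZ l s)) := by
    intro l s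
    obtain ⟨N0, hN0⟩ := exists_nat_ge (fZ l s)
    refine tendsto_const_nhds.congr' ?_
    filter_upwards [eventually_ge_atTop N0] with N hN
    have : (N0 : ℝ) ≤ N := by exact_mod_cast hN
    exact (min_eq_left (hN0.trans this)).symm
  have hfle : ∀ l s, fZ l s ≤ |(l : ℝ)| := by
    intro l s
    exact max_le (abs_nonneg _) (by linarith [hHa s, le_abs_self (l : ℝ)])
  have hglip : ∀ N (l n : ℤ) s j, g N l j - g N (l + n) s ≤ |(n : ℝ)| + 2 * H := by
    intro N l n s j
    have hx : 0 ≤ |(n : ℝ)| + 2 * H := by positivity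
    have h1 : fZ l j ≤ fZ (l + n) s + (|(n : ℝ)| + 2 * H) := by
      refine max_le (add_nonneg (hf0 _ _) hx) ?_
      have h2 : ((l + n : ℤ) : ℝ) + h s - H ≤ fZ (l + n) s := le_max_right _ _
      push_cast at h2
      linarith [hHa j, hHb s, neg_abs_le (n : ℝ)]
    have h2 : g N l j ≤ g N (l + n) s + (|(n : ℝ)| + 2 * H) := by
      simp only [hg]
      rw [← min_add_add_right]
      exact le_min ((min_le_left _ _).trans h1) ((min_le_right _ _).trans (by linarith))
    linarith
  set D : ℕ → S m → ℝ := fun N x => ∑' y : S m, P A B x y * g N y.1 y.2 - g N x.1 x.2 with hD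
  have hDsum : ∀ N, HasSum (fun x => pd x * D N x) 0 := fun N =>
    stat_swap hP hpd (fun x => g N x.1 x.2) N (fun x => hg0 _ _ _) (fun x => hgN _ _ _)
  have hPgs : ∀ N x, Summable fun y : S m => P A B x y * g N y.1 y.2 := fun N x =>
    Summable.of_nonneg_of_le (fun y => mul_nonneg (hP0 _ _) (hg0 _ _ _))
      (fun y => mul_le_mul_of_nonneg_left (hgN N _ _) (hP0 x y)) ((hP1 x).summable.mul_right _)
  have hDz : ∀ N (x : S m), fZ x.1 x.2 = 0 → 0 ≤ D N x := by
    intro N x hx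
    have : g N x.1 x.2 = 0 := le_antisymm ((hgf _ _ _).trans_eq hx) (hg0 _ _ _)
    simp only [hD, this, sub_zero]
    exact tsum_nonneg fun y => mul_nonneg (hP0 _ _) (hg0 _ _ _)
  have htr : ∀ N (i : ℕ) j, HasSum (fun p : ℤ × Fin m => A p.1 j p.2 * g N ((i : ℤ) + 1 + p.1) p.2)
      (∑' y : S m, P A B (i + 1, j) y * g N y.1 y.2) := fun N i j =>
    (kernel_transfer A B (g N) (hgz N) i j _).1 (hPgs N _).hasSum
  -- uniform lower bound
  have hKs : ∀ j, Summable fun p : ℤ × Fin m => A p.1 j p.2 * (|(p.1 : ℝ)| + 2 * H) := by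
    intro j
    simp only [mul_add]
    exact (hWabs j).add ((hW1 j).summable.mul_right _)
  set K : ℝ := ∑ j, ∑' p : ℤ × Fin m, A p.1 j p.2 * (|(p.1 : ℝ)| + 2 * H) with hK
  have hKnn : ∀ j, 0 ≤ ∑' p : ℤ × Fin m, A p.1 j p.2 * (|(p.1 : ℝ)| + 2 * H) := fun j =>
    tsum_nonneg fun p => mul_nonneg (hA0 _ _ _) (by positivity)
  have hK0 : 0 ≤ K := Finset.sum_nonneg fun j _ => hKnn j
  have hDK : ∀ N x, -D N x ≤ K := by
    rintro N ⟨i, j⟩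
    cases i with
    | zero =>
      have := hDz N (0, j) (hfz _ _ (by simp))
      linarith
    | succ i =>
      have h1 := ((hW1 j).mul_right (g N ((i : ℤ) + 1) j)).sub (htr N i j)
      have h2 : -D N (i + 1, j) ≤ ∑' p : ℤ × Fin m, A p.1 j p.2 * (|(p.1 : ℝ)| + 2 * H) := by
        have h3 := hasSum_le (fun p : ℤ × Fin m => ?_) h1 (hKs j).hasSum
        · simp only [hD]
          push_cast
          linarith
        · rw [← mul_sub]
          exact mul_le_mul_of_nonneg_left (hglip _ _ _ _ _) (hA0 _ _ _)
      exact h2.trans (Finset.single_le_sum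
        (f := fun j => ∑' p : ℤ × Fin m, A p.1 j p.2 * (|(p.1 : ℝ)| + 2 * H))
        (fun j _ => hKnn j) (Finset.mem_univ j))
  set d : ℕ → S m → ℝ := fun N x => max (-D N x) 0 with hd
  have hd0 : ∀ N x, 0 ≤ d N x := fun N x => le_max_right _ _
  have hdK : ∀ N x, d N x ≤ K := fun N x => max_le (hDK N x) hK0
  have hdt : ∀ x, Tendsto (fun N => d N x) atTop (𝓝 0) := by
    rintro ⟨i, j⟩
    cases i with
    | zero =>
      refine tendsto_const_nhds.congr fun N => ?_
      have := hDz N (0, j) (hfz _ _ (by simp))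
      exact (max_eq_right (by linarith)).symm
    | succ i =>
      have hdom : Summable fun p : ℤ × Fin m => A p.1 j p.2 * fZ ((i : ℤ) + 1 + p.1) p.2 := by
        have : Summable fun p : ℤ × Fin m => A p.1 j p.2 * ((i : ℝ) + 1) + A p.1 j p.2 * |(p.1 : ℝ)| :=
          ((hW1 j).summable.mul_right _).add (hWabs j)
        refine Summable.of_nonneg_of_le (fun p => mul_nonneg (hA0 _ _ _) (hf0 _ _)) (fun p => ?_) this
        rw [← mul_add]
        refine mul_le_mul_of_nonneg_left ((hfle _ _).trans ?_) (hA0 _ _ _)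
        push_cast
        refine (abs_add_le _ _).trans ?_
        rw [abs_of_nonneg (by positivity : (0:ℝ) ≤ (i:ℝ) + 1)]
      have h1 : Tendsto (fun N => ∑' p : ℤ × Fin m, A p.1 j p.2 * g N ((i : ℤ) + 1 + p.1) p.2) atTop
          (𝓝 (∑' p : ℤ × Fin m, A p.1 j p.2 * fZ ((i : ℤ) + 1 + p.1) p.2)) := by
        refine tendsto_tsum_of_dominated_convergence hdom (fun p => (hgt _ _).const_mul _) ?_
        refine Eventually.of_forall fun N p => ?_
        rw [Real.norm_of_nonneg (mul_nonneg (hA0 _ _ _) (hg0 _ _ _))]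
        exact mul_le_mul_of_nonneg_left (hgf _ _ _) (hA0 _ _ _)
      have h2 : fZ ((i : ℤ) + 1) j ≤ ∑' p : ℤ × Fin m, A p.1 j p.2 * fZ ((i : ℤ) + 1 + p.1) p.2 := by
        refine max_le (tsum_nonneg fun p => mul_nonneg (hA0 _ _ _) (hf0 _ _)) ?_
        have h3 := (hWmean j).add ((hW1 j).mul_right ((i : ℝ) + 1 - H))
        have h4 := hasSum_le (fun p : ℤ × Fin m => ?_) h3 hdom.hasSum
        · push_cast
          linarith
        · rw [← mul_add]
          refine mul_le_mul_of_nonneg_left ?_ (hA0 _ _ _)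
          refine le_trans (le_of_eq ?_) (le_max_right _ _)
          push_cast; ring
      have h5 : Tendsto (fun N => D N (i + 1, j)) atTop
          (𝓝 (∑' p : ℤ × Fin m, A p.1 j p.2 * fZ ((i : ℤ) + 1 + p.1) p.2 - fZ ((i : ℤ) + 1) j)) := by
        refine (h1.sub (hgt ((i : ℤ) + 1) j)).congr fun N => ?_
        simp only [hD]
        rw [(htr N i j).tsum_eq]
        push_cast
        rfl
      have h6 := h5.neg.max (tendsto_const_nhds (x := (0 : ℝ)))
      rwa [max_eq_right (by linarith)] at h6
  have hpdd : Tendsto (fun N => ∑' x, pd x * d N x) atTop (𝓝 0) := by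
    have : Tendsto (fun N => ∑' x, pd x * d N x) atTop (𝓝 (∑' x : S m, pd x * 0)) := by
      refine tendsto_tsum_of_dominated_convergence (hpd1.summable.mul_right K)
        (fun x => (hdt x).const_mul _) (Eventually.of_forall fun N x => ?_)
      rw [Real.norm_of_nonneg (mul_nonneg (hpd0 _) (hd0 _ _))]
      exact mul_le_mul_of_nonneg_left (hdK _ _) (hpd0 _)
    simpa using this
  -- positivity of pd
  have hpdpos : ∀ y, 0 < pd y := by
    obtain ⟨x, hx⟩ : ∃ x, 0 < pd x := by
      by_contra hcon
      push Not at hcon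
      have : pd = fun _ => 0 := funext fun x => le_antisymm (hcon x) (hpd0 x)
      rw [this] at hpd1
      exact zero_ne_one (hasSum_zero.unique hpd1)
    intro y
    obtain ⟨n, -, hn⟩ := hirr x y
    refine closed_reach hP0 (fun z => 0 < pd z) (fun a b ha hab => ?_) n x y hx hn
    exact lt_of_lt_of_le (mul_pos ha hab)
      (le_hasSum (hpds b) a fun c _ => mul_nonneg (hpd0 _) (hP0 _ _))
  -- the crossing
  obtain ⟨x, y, hx, hxy, hy⟩ : ∃ x y : S m, fZ x.1 x.2 = 0 ∧ 0 < P A B x y ∧ fZ y.1 y.2 ≠ 0 := by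
    by_contra hcon
    push Not at hcon
    obtain ⟨M, hM⟩ := exists_nat_gt (2 * H)
    let j0 : Fin m := ⟨0, hm⟩
    obtain ⟨n, -, hn⟩ := hirr (0, j0) (M, j0)
    have := closed_reach hP0 (fun z => fZ z.1 z.2 = 0) (fun a b ha hab => hcon a b ha hab) n
      (0, j0) (M, j0) (hfz _ _ (by simp)) hn
    have h2 : (((M : ℤ) : ℝ)) + h j0 - H ≤ fZ (M : ℤ) j0 := le_max_right _ _
    simp only at this
    rw [this] at h2
    push_cast at h2
    linarith [hHb j0]
  have hyp : 0 < fZ y.1 y.2 := lt_of_le_of_ne (hf0 _ _) (Ne.symm hy)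
  obtain ⟨N0, hN0⟩ := exists_nat_ge (fZ y.1 y.2)
  have hδ : 0 < pd x * (P A B x y * fZ y.1 y.2) := mul_pos (hpdpos x) (mul_pos hxy hyp)
  obtain ⟨N, hNN, hNd⟩ := ((eventually_ge_atTop N0).and (hpdd.eventually_lt_const hδ)).exists
  have hDx : P A B x y * fZ y.1 y.2 ≤ D N x := by
    have h1 : g N x.1 x.2 = 0 := le_antisymm ((hgf _ _ _).trans_eq hx) (hg0 _ _ _)
    have h2 : g N y.1 y.2 = fZ y.1 y.2 :=
      min_eq_left (hN0.trans (by exact_mod_cast hNN))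
    simp only [hD, h1, sub_zero]
    rw [← h2]
    exact (hPgs N x).le_tsum y fun z _ => mul_nonneg (hP0 _ _) (hg0 _ _ _)
  have hds : Summable fun x => pd x * d N x :=
    Summable.of_nonneg_of_le (fun x => mul_nonneg (hpd0 _) (hd0 _ _))
      (fun x => mul_le_mul_of_nonneg_left (hdK _ _) (hpd0 _)) (hpd1.summable.mul_right K)
  have hfin := (hDsum N).add hds.hasSum
  have h3 : ∀ z, 0 ≤ pd z * D N z + pd z * d N z := by
    intro z
    rw [← mul_add]
    exact mul_nonneg (hpd0 _) (by have : -D N z ≤ d N z := le_max_left _ _; linarith)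
  have h4 := le_hasSum hfin x fun z _ => h3 z
  have h5 := mul_le_mul_of_nonneg_left hDx (hpd0 x)
  have h6 := mul_nonneg (hpd0 x) (hd0 N x)
  linarith

theorem near_good {m : ℕ} (hm : 0 < m) (A B : ℤ → Matrix (Fin m) (Fin m) ℝ)
    (hA0 : ∀ k r s, 0 ≤ A k r s) (hs : ∀ r s, Summable fun n => A n r s)
    (hP : Stochastic (P A B)) (hirr : ChainIrreducible (P A B))
    (hphase : PhaseStochastic A) (hphaseirr : MatIrreducible (matA A))
    (pd : S m → ℝ) (hpd : IsStationary (P A B) pd)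
    {R : ℝ} (hR : 1 < R) (hRs : ∀ j s, Summable fun n : ℤ => A n j s * R ^ n) :
    ∀ᶠ x in 𝓝[>] (1 : ℝ), Good (AstarR A x) := by
  have hM0 : ∀ r s, 0 ≤ matA A r s := fun r s => tsum_nonneg fun n => hA0 n r s
  have hrow : ∀ r, ∑ s, matA A r s = 1 := fun r =>
    (pair_hasSum (fun n s => A n r s) _ (fun s => (hs r s).hasSum)).unique (hphase r)
  have hR1 : 0 < R - 1 := by linarith
  have hposb : ∀ n : ℤ, ((max n 0 : ℤ) : ℝ) ≤ R ^ n * (R - 1)⁻¹ := by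
    intro n
    rw [← div_eq_mul_inv, le_div_iff₀ hR1]
    rcases le_total n 0 with hn | hn
    · rw [max_eq_right hn]; simp; exact zpow_nonneg (by linarith) n
    · obtain ⟨k, rfl⟩ := Int.eq_ofNat_of_zero_le hn
      rw [max_eq_left hn, zpow_natCast]
      have := one_add_mul_le_pow (by linarith : -2 ≤ R - 1) k
      rw [show 1 + (R - 1) = R by ring] at this
      push_cast
      linarith
  have hpos : ∀ j s, Summable fun n : ℤ => A n j s * ((max n 0 : ℤ) : ℝ) := by
    intro j s
    refine Summable.of_nonneg_of_le (fun n => mul_nonneg (hA0 _ _ _) (by positivity)) (fun n => ?_)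
      ((hRs j s).mul_right (R - 1)⁻¹)
    rw [mul_assoc]
    exact mul_le_mul_of_nonneg_left (hposb n) (hA0 _ _ _)
  by_cases hmean : ∀ j s, Summable fun n : ℤ => A n j s * |(n : ℝ)|
  · obtain ⟨h, μ, hh⟩ := poisson hM0 hrow hphaseirr ⟨0, hm⟩
      (fun j => ∑ s, ∑' n : ℤ, A n j s * (n : ℝ))
    have hpo : ∀ j, ∑ s, (∑' n : ℤ, A n j s * (n : ℝ)) + (matA A).mulVec h j - h j = μ :=
      fun j => by have := hh j; linarith
    have hμ : μ < 0 := by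
      by_contra hcon
      exact no_nonneg_drift hm A B hA0 hs hP hirr hphase pd hpd hmean h μ (not_lt.1 hcon) hpo
    have ht : ∀ j, Tendsto (fun N : ℕ => ∑ s, (∑' n : ℤ, A n j s * ((max n (-(N : ℤ)) : ℤ) : ℝ))
        + (matA A).mulVec h j - h j) atTop (𝓝 μ) := by
      intro j
      rw [← hpo j]
      refine ((tendsto_finsetSum _ fun s _ => ?_).add_const _).sub_const _
      refine tendsto_tsum_of_dominated_convergence (hmean j s) (fun n => ?_)
        (Eventually.of_forall fun N n => ?_)
      · refine tendsto_const_nhds.congr' ?_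
        filter_upwards [eventually_ge_atTop n.natAbs] with N hN
        rw [max_eq_left (by omega)]
      · rw [norm_mul, Real.norm_of_nonneg (hA0 _ _ _), Real.norm_eq_abs]
        refine mul_le_mul_of_nonneg_left ?_ (hA0 _ _ _)
        have : |max n (-(N : ℤ))| ≤ |n| := by
          rw [abs_le]; have := le_abs_self n; have := neg_abs_le n; omega
        exact_mod_cast this
    obtain ⟨N, hN⟩ := (eventually_all.2 fun j => (ht j).eventually_lt_const hμ).exists
    exact good_near_one hA0 hs hrow hR hRs N h hN
  · push Not at hmean
    obtain ⟨j, s, hjs⟩ := hmean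
    obtain ⟨h, c, hh⟩ := poisson hM0 hrow hphaseirr ⟨0, hm⟩ (Pi.single j 1)
    have hc : 0 < c := by
      by_contra hcon
      push Not at hcon
      have hsn : ∀ r, (0 : ℝ) ≤ (Pi.single j 1 : Fin m → ℝ) r := by
        intro r; by_cases hr : r = j
        · subst hr; simp
        · simp [hr]
      have hcst := const_of_super hM0 hrow hphaseirr h fun r => by linarith [hh r, hsn r]
      have h1 : (matA A).mulVec h j = h j := by
        simp only [Matrix.mulVec, dotProduct]
        rw [Finset.sum_congr rfl (fun t _ => by rw [hcst t j]), ← Finset.sum_mul, hrow, one_mul]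
      have h2 := hh j
      rw [h1] at h2
      simp only [Pi.single_eq_same] at h2
      linarith
    set K : ℝ := ∑ r, ∑ t, ∑' n : ℤ, A n r t * ((max n 0 : ℤ) : ℝ) with hK
    set L : ℕ → ℝ := fun N => ∑' n : ℤ, A n j s * ((min (max (-n) 0) (N : ℤ) : ℤ) : ℝ) with hL
    have hLs : ∀ (N : ℕ) r t, Summable fun n : ℤ => A n r t * ((min (max (-n) 0) (N : ℤ) : ℤ) : ℝ) := by
      intro N r t
      refine Summable.of_nonneg_of_le (fun n => mul_nonneg (hA0 _ _ _) ?_) (fun n => ?_)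
        ((hs r t).mul_right (N : ℝ))
      · exact_mod_cast (by omega : 0 ≤ min (max (-n) 0) (N : ℤ))
      · refine mul_le_mul_of_nonneg_left ?_ (hA0 _ _ _)
        exact_mod_cast (by omega : min (max (-n) 0) (N : ℤ) ≤ N)
    obtain ⟨N, hN⟩ : ∃ N, K < L N * c := by
      by_contra hcon
      push Not at hcon
      apply hjs
      have hneg : Summable fun n : ℤ => A n j s * ((max (-n) 0 : ℤ) : ℝ) := by
        refine summable_of_sum_le (c := K / c)
          (fun n => mul_nonneg (hA0 _ _ _) (by positivity)) fun u => ?_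
        have h1 : L (∑ n ∈ u, n.natAbs) ≤ K / c := (le_div_iff₀ hc).2 (hcon _)
        refine le_trans ?_ h1
        refine le_trans (Finset.sum_le_sum fun n hn => ?_)
          ((hLs (∑ n ∈ u, n.natAbs) j s).sum_le_tsum u fun n _ => mul_nonneg (hA0 _ _ _) ?_)
        · have h2 : n.natAbs ≤ ∑ n ∈ u, n.natAbs :=
            Finset.single_le_sum (f := fun n : ℤ => n.natAbs) (fun _ _ => Nat.zero_le _) hn
          rw [min_eq_left (by omega)]
        · exact_mod_cast (by omega : 0 ≤ min (max (-n) 0) ((∑ n ∈ u, n.natAbs : ℕ) : ℤ))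
      refine ((hpos j s).add hneg).congr fun n => ?_
      rw [← mul_add]
      congr 1
      have : max n 0 + max (-n) 0 = |n| := by
        rcases le_total 0 n with hn | hn
        · rw [abs_of_nonneg hn]; omega
        · rw [abs_of_nonpos hn]; omega
      exact_mod_cast this
    refine good_near_one hA0 hs hrow hR hRs N (fun r => -(L N) * h r) fun r => ?_
    have hsplit : ∀ t, ∑' n : ℤ, A n r t * ((max n (-(N : ℤ)) : ℤ) : ℝ) =
        ∑' n : ℤ, A n r t * ((max n 0 : ℤ) : ℝ)
        - ∑' n : ℤ, A n r t * ((min (max (-n) 0) (N : ℤ) : ℤ) : ℝ) := by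
      intro t
      rw [← (hpos r t).tsum_sub (hLs N r t)]
      refine tsum_congr fun n => ?_
      rw [← mul_sub]
      congr 1
      have : max n (-(N : ℤ)) = max n 0 - min (max (-n) 0) (N : ℤ) := by omega
      exact_mod_cast this
    have hmul : (matA A).mulVec (fun r => -(L N) * h r) r = -(L N) * (matA A).mulVec h r := by
      simp only [Matrix.mulVec, dotProduct, Finset.mul_sum]
      exact Finset.sum_congr rfl fun t _ => by ring
    have hpnn : ∀ r t, 0 ≤ ∑' n : ℤ, A n r t * ((max n 0 : ℤ) : ℝ) := fun r t =>
      tsum_nonneg fun n => mul_nonneg (hA0 _ _ _) (by positivity)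
    have hlnn : ∀ r t, 0 ≤ ∑' n : ℤ, A n r t * ((min (max (-n) 0) (N : ℤ) : ℤ) : ℝ) := fun r t =>
      tsum_nonneg fun n => mul_nonneg (hA0 _ _ _)
        (by exact_mod_cast (by omega : 0 ≤ min (max (-n) 0) (N : ℤ)))
    have hKr : ∑ t, ∑' n : ℤ, A n r t * ((max n 0 : ℤ) : ℝ) ≤ K :=
      Finset.single_le_sum (f := fun r => ∑ t, ∑' n : ℤ, A n r t * ((max n 0 : ℤ) : ℝ))
        (fun r _ => Finset.sum_nonneg fun t _ => hpnn r t) (Finset.mem_univ r)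
    have hLr : L N * (Pi.single j 1 : Fin m → ℝ) r ≤
        ∑ t, ∑' n : ℤ, A n r t * ((min (max (-n) 0) (N : ℤ) : ℤ) : ℝ) := by
      by_cases hr : r = j
      · subst hr
        simp only [Pi.single_eq_same, mul_one]
        exact Finset.single_le_sum
          (f := fun t => ∑' n : ℤ, A n r t * ((min (max (-n) 0) (N : ℤ) : ℤ) : ℝ))
          (fun t _ => hlnn r t) (Finset.mem_univ s)
      · simp only [Pi.single_eq_of_ne hr, mul_zero]
        exact Finset.sum_nonneg fun t _ => hlnn r t
    rw [Finset.sum_congr rfl (fun t _ => hsplit t), Finset.sum_sub_distrib, hmul]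
    have h1 : L N * (h r - (matA A).mulVec h r) = L N * ((Pi.single j 1 : Fin m → ℝ) r - c) := by
      rw [hh r]
    linarith

/-- For an irreducible, aperiodic, positive recurrent `GI/G/1`-type Markov
chain whose phase matrix `A` is stochastic: if `Ω = {z : 1 < |z| < φ_{A+}, det(I - A*(z)) = 0}`
is nonempty, then it contains a positive real number `z₀` of minimal modulus. -/
theorem omega_has_minimal_positive_real {m : ℕ} (hm : 0 < m)
    (A B : ℤ → Matrix (Fin m) (Fin m) ℝ)
    (hA0 : ∀ k r s, 0 ≤ A k r s) (hB0 : ∀ k r s, 0 ≤ B k r s)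
    (hP : Stochastic (P A B))
    (hirr : ChainIrreducible (P A B)) (hap : ChainAperiodic (P A B))
    (hphase : PhaseStochastic A) (hphaseirr : MatIrreducible (matA A))
    (pd : S m → ℝ) (hpd : IsStationary (P A B) pd)
    (hNe : (Omega A).Nonempty) :
    ∃ z0 : ℂ, z0 ∈ Omega A ∧ 0 < z0.re ∧ z0.im = 0 ∧
      ∀ z ∈ Omega A, ‖z0‖ ≤ ‖z‖ := by
  have hs : ∀ r s, Summable fun n => A n r s := fun r s =>
    (hphase r).summable.comp_injective (i := fun n : ℤ => (n, s))
      (fun a b h => by simpa using h)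
  obtain ⟨w, hw⟩ := hNe
  exact main_of_near hA0 hs w hw (near_good hm A B hA0 hs hP hirr hphase hphaseirr pd hpd hw.1
    (summable_R hA0 hs hw.1 hw.2.1))

end GIG1
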